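/- arXiv:2110.09069 — 2 statements merged into one kernel-verified Lean document; each statement's English description precedes it below -/
import Mathlib

section
/- Let a, b, c be points of the Euclidean plane with b ≠ a and c ≠ a, and suppose ∠bac ≥ 2π/3. Then for every point x of the plane, dist(a,b) + dist(a,c) ≤ dist(x,a) + dist(x,b) + dist(x,c); that is, the vertex a itself minimizes the total distance to a, b and c. -/
open EuclideanGeometry Real

/-!
The unit vector pointing from `a` to `p` is minus a subgradient at `a` of the convex function
`x ↦ dist x p`. Hence moving from `a` to `x` decreases a sum of distances to points `p i` by at most
`dist x a` times the length of the sum of the corresponding unit vectors. Two unit vectors at an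
angle of at least `2π/3` have a sum of length at most `1`, so for `b` and `c` that decrease is
compensated by the term `dist x a`.
-/

open NormedSpace (normalize)

lemma cos_two_mul_pi_div_three : cos (2 * π / 3) = -(1 / 2) := by
  rw [show 2 * π / 3 = π - π / 3 by ring, cos_pi_sub, cos_pi_div_three]

lemma norm_normalize_le_one {V : Type*} [NormedAddCommGroup V] [NormedSpace ℝ V] (u : V) :
    ‖normalize u‖ ≤ 1 := by
  rw [NormedSpace.normalize, norm_smul, norm_inv, norm_norm]
  exact inv_mul_le_one

section InnerProductSpace

variable {V : Type*} [NormedAddCommGroup V] [InnerProductSpace ℝ V]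

lemma inner_le_neg_half_mul_norm_mul_norm_of_wide_angle {u v : V}
    (h : 2 * π / 3 ≤ InnerProductGeometry.angle u v) :
    inner ℝ u v ≤ -(1 / 2) * (‖u‖ * ‖v‖) := by
  rw [← InnerProductGeometry.cos_angle_mul_norm_mul_norm, ← cos_two_mul_pi_div_three]
  gcongr
  exact cos_le_cos_of_nonneg_of_le_pi (by positivity) (InnerProductGeometry.angle_le_pi u v) h

lemma norm_add_le_max_of_wide_angle {u v : V}
    (h : 2 * π / 3 ≤ InnerProductGeometry.angle u v) :
    ‖u + v‖ ≤ max ‖u‖ ‖v‖ := by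
  wlog huv : ‖u‖ ≤ ‖v‖ generalizing u v
  · rw [add_comm, max_comm]
    exact this (InnerProductGeometry.angle_comm u v ▸ h) (le_of_not_ge huv)
  rw [max_eq_right huv]
  refine le_of_sq_le_sq ?_ (norm_nonneg v)
  calc ‖u + v‖ ^ 2 = ‖u‖ ^ 2 + 2 * inner ℝ u v + ‖v‖ ^ 2 := norm_add_sq_real u v
    _ ≤ ‖u‖ ^ 2 + 2 * (-(1 / 2) * (‖u‖ * ‖v‖)) + ‖v‖ ^ 2 := by
      gcongr
      exact inner_le_neg_half_mul_norm_mul_norm_of_wide_angle h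
    _ = ‖v‖ ^ 2 - ‖u‖ * (‖v‖ - ‖u‖) := by ring
    _ ≤ ‖v‖ ^ 2 := sub_le_self _ (mul_nonneg (norm_nonneg u) (sub_nonneg.mpr huv))

lemma norm_normalize_add_normalize_le_one_of_wide_angle {u v : V}
    (h : 2 * π / 3 ≤ InnerProductGeometry.angle u v) :
    ‖normalize u + normalize v‖ ≤ 1 := by
  have h_normalize : 2 * π / 3 ≤ InnerProductGeometry.angle (normalize u) (normalize v) := by
    rwa [InnerProductGeometry.angle_normalize_left, InnerProductGeometry.angle_normalize_right]
  exact (norm_add_le_max_of_wide_angle h_normalize).trans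
    (max_le (norm_normalize_le_one u) (norm_normalize_le_one v))

lemma inner_normalize_self (u : V) : inner ℝ (normalize u) u = ‖u‖ := by
  rw [NormedSpace.normalize, real_inner_smul_left, real_inner_self_eq_norm_mul_norm, ← mul_assoc]
  exact inv_mul_mul_self ‖u‖

lemma inner_normalize_le_norm (u v : V) : inner ℝ (normalize u) v ≤ ‖v‖ :=
  (real_inner_le_norm _ _).trans
    (mul_le_of_le_one_left (norm_nonneg v) (norm_normalize_le_one u))

lemma norm_le_inner_normalize_add_norm_sub (u y : V) :
    ‖u‖ ≤ inner ℝ (normalize u) y + ‖u - y‖ := by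
  calc ‖u‖ = inner ℝ (normalize u) y + inner ℝ (normalize u) (u - y) := by
        rw [← inner_add_right, add_sub_cancel, inner_normalize_self]
    _ ≤ inner ℝ (normalize u) y + ‖u - y‖ := by
      gcongr
      exact inner_normalize_le_norm u (u - y)

variable {P : Type*} [MetricSpace P] [NormedAddTorsor V P]

lemma dist_le_inner_normalize_add_dist (a p x : P) :
    dist a p ≤ inner ℝ (normalize (p -ᵥ a)) (x -ᵥ a) + dist x p := by
  simpa only [vsub_sub_vsub_cancel_right, ← dist_eq_norm_vsub, dist_comm p]
    using norm_le_inner_normalize_add_norm_sub (p -ᵥ a) (x -ᵥ a)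

lemma sum_dist_le_norm_sum_normalize_mul_dist_add_sum_dist {ι : Type*} (s : Finset ι)
    (p : ι → P) (a x : P) :
    ∑ i ∈ s, dist a (p i) ≤
      ‖∑ i ∈ s, normalize (p i -ᵥ a)‖ * dist x a + ∑ i ∈ s, dist x (p i) := by
  calc ∑ i ∈ s, dist a (p i)
      ≤ ∑ i ∈ s, (inner ℝ (normalize (p i -ᵥ a)) (x -ᵥ a) + dist x (p i)) :=
        Finset.sum_le_sum fun i _ ↦ dist_le_inner_normalize_add_dist a (p i) x
    _ = inner ℝ (∑ i ∈ s, normalize (p i -ᵥ a)) (x -ᵥ a) + ∑ i ∈ s, dist x (p i) := by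
        rw [Finset.sum_add_distrib, sum_inner]
    _ ≤ ‖∑ i ∈ s, normalize (p i -ᵥ a)‖ * dist x a + ∑ i ∈ s, dist x (p i) := by
        rw [dist_eq_norm_vsub V x a]
        gcongr
        exact real_inner_le_norm _ _

theorem fermat_point_at_wide_vertex_general {a b c : P} (hA : 2 * π / 3 ≤ ∠ b a c) (x : P) :
    dist a b + dist a c ≤ dist x a + dist x b + dist x c := by
  have h_sum := sum_dist_le_norm_sum_normalize_mul_dist_add_sum_dist Finset.univ ![b, c] a x
  simp only [Fin.sum_univ_two, Matrix.cons_val_zero, Matrix.cons_val_one] at h_sum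
  have h_norm : ‖normalize (b -ᵥ a) + normalize (c -ᵥ a)‖ * dist x a ≤ dist x a :=
    mul_le_of_le_one_left dist_nonneg (norm_normalize_add_normalize_le_one_of_wide_angle hA)
  linarith

end InnerProductSpace

/-- If the angle of a triangle `abc` at the vertex `a` is at least `2π/3`, then `a` itself
minimizes the total distance to the three vertices `a`, `b`, `c` (it is the Fermat point). -/
theorem fermat_point_at_wide_vertex
    (a b c : EuclideanSpace ℝ (Fin 2))
    (hb : b ≠ a) (hc : c ≠ a)
    (hA : 2 * π / 3 ≤ ∠ b a c) :
    ∀ x : EuclideanSpace ℝ (Fin 2),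
      dist a b + dist a c ≤ dist x a + dist x b + dist x c :=
  fermat_point_at_wide_vertex_general hA
end

section
/- Let a, b, c, s be points of the Euclidean plane with a ≠ b, s ∉ {a, b, c}, and ∠asb = ∠bsc = ∠csa = 2π/3. Let d be a point with dist(d,a) = dist(d,b) = dist(a,b) (so that the triangle abd is equilateral) such that c and d lie strictly on opposite sides of the line through a and b. Then dist(c,d) = dist(s,a) + dist(s,b) + dist(s,c). -/
open EuclideanGeometry Real

/-!
On the ray from `s` opposite to `c`, let `e` be the point at distance `dist s a + dist s b` from
`s`, so that `dist c e = dist s c + dist s a + dist s b`. The edges `sa` and `sb` make angles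
`π / 3` with that ray, and the law of cosines shows that `e` is an apex of an equilateral triangle
on `ab`. The unit vectors along the three edges sum to zero, so the foot on `ab` of the bisector of
`∠ a s b` lies on the segment `ce`; hence `d` and `e` lie on the same side of `ab`. If they were
distinct, `a` and `b` would lie on the perpendicular bisector of `de`, which separates `d` from `e`.
-/

section Angle

theorem cos_two_pi_div_three : cos (2 * π / 3) = -1 / 2 := by
  rw [show 2 * π / 3 = π - π / 3 by ring, cos_pi_sub, cos_pi_div_three]
  norm_num

variable {V : Type*} [NormedAddCommGroup V] [InnerProductSpace ℝ V] {x y z : V}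

theorem ne_zero_left_of_angle_eq_two_pi_div_three
    (h : InnerProductGeometry.angle x y = 2 * π / 3) : x ≠ 0 := by
  rintro rfl
  rw [InnerProductGeometry.angle_zero_left] at h
  linarith [pi_pos]

theorem ne_zero_right_of_angle_eq_two_pi_div_three
    (h : InnerProductGeometry.angle x y = 2 * π / 3) : y ≠ 0 :=
  ne_zero_left_of_angle_eq_two_pi_div_three (InnerProductGeometry.angle_comm x y ▸ h)

theorem inner_normalize_of_angle_eq_two_pi_div_three
    (h : InnerProductGeometry.angle x y = 2 * π / 3) :
    inner ℝ (NormedSpace.normalize x) (NormedSpace.normalize y) = -1 / 2 := by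
  rw [InnerProductGeometry.inner_eq_cos_angle_of_norm_eq_one
    (NormedSpace.norm_normalize_eq_one_iff.2 (ne_zero_left_of_angle_eq_two_pi_div_three h))
    (NormedSpace.norm_normalize_eq_one_iff.2 (ne_zero_right_of_angle_eq_two_pi_div_three h)),
    InnerProductGeometry.angle_normalize_left, InnerProductGeometry.angle_normalize_right, h,
    cos_two_pi_div_three]

theorem normalize_add_normalize_add_normalize_of_angle_eq_two_pi_div_three
    (hxy : InnerProductGeometry.angle x y = 2 * π / 3)
    (hyz : InnerProductGeometry.angle y z = 2 * π / 3)
    (hzx : InnerProductGeometry.angle z x = 2 * π / 3) :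
    NormedSpace.normalize x + NormedSpace.normalize y + NormedSpace.normalize z = 0 := by
  have norm_x := NormedSpace.norm_normalize_eq_one_iff.2
    (ne_zero_left_of_angle_eq_two_pi_div_three hxy)
  have norm_y := NormedSpace.norm_normalize_eq_one_iff.2
    (ne_zero_left_of_angle_eq_two_pi_div_three hyz)
  have norm_z := NormedSpace.norm_normalize_eq_one_iff.2
    (ne_zero_left_of_angle_eq_two_pi_div_three hzx)
  rw [← norm_eq_zero, ← sq_eq_zero_iff, norm_add_sq_real, norm_add_sq_real, inner_add_left,
    norm_x, norm_y, norm_z, inner_normalize_of_angle_eq_two_pi_div_three hxy,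
    inner_normalize_of_angle_eq_two_pi_div_three hyz, real_inner_comm,
    inner_normalize_of_angle_eq_two_pi_div_three hzx]
  norm_num

end Angle

section Melzak

variable {V P : Type*} [NormedAddCommGroup V] [InnerProductSpace ℝ V] [MetricSpace P]
  [NormedAddTorsor V P] {a b c d e s p q : P} {r r₁ r₂ : ℝ}

theorem dist_eq_dist_of_angle_eq_pi_div_three (hab : ∠ a s b = 2 * π / 3) (hae : ∠ a s e = π / 3)
    (he : dist s e = dist s a + dist s b) : dist e a = dist a b := by
  have law_ab := law_cos a s b
  have law_ae := law_cos a s e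
  rw [hab, cos_two_pi_div_three, dist_comm a s, dist_comm b s] at law_ab
  rw [hae, cos_pi_div_three, dist_comm a s, dist_comm e s, he, dist_comm a e] at law_ae
  rw [← sq_eq_sq₀ dist_nonneg dist_nonneg]
  linear_combination law_ae - law_ab

theorem eq_of_wSameSide_of_le_perpBisector {S : AffineSubspace ℝ P} (h : S.WSameSide p q)
    (hS : S ≤ AffineSubspace.perpBisector p q) : p = q := by
  have same_side : (AffineSubspace.perpBisector p q).WSameSide p q := by
    obtain ⟨p₁, hp₁, p₂, hp₂, hray⟩ := h
    exact ⟨p₁, hS hp₁, p₂, hS hp₂, hray⟩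
  have opp_side : (AffineSubspace.perpBisector p q).WOppSide p q :=
    (wbtw_midpoint ℝ p q).wOppSide₁₃ (AffineSubspace.midpoint_mem_perpBisector p q)
  simpa using AffineSubspace.wSameSide_and_wOppSide_iff.1 ⟨same_side, opp_side⟩

theorem eq_of_wSameSide_of_dist_eq (h : line[ℝ, a, b].WSameSide p q)
    (ha : dist p a = dist q a) (hb : dist p b = dist q b) : p = q :=
  eq_of_wSameSide_of_le_perpBisector h <| affineSpan_pair_le_of_mem_of_mem
    (AffineSubspace.mem_perpBisector_iff_dist_eq'.2 ha)
    (AffineSubspace.mem_perpBisector_iff_dist_eq'.2 hb)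

/-- The point at signed distance `r` from `s` along the ray from `s` opposite to `c`; both the apex
of the equilateral triangle and the foot of the bisector at `s` have this form. It equals `s` when
`c = s`, whatever `r` is. -/
noncomputable def pointBeyond (c s : P) (r : ℝ) : P :=
  AffineMap.lineMap s c (-r / dist s c)

@[simp]
theorem pointBeyond_zero (c s : P) : pointBeyond c s 0 = s := by
  simp [pointBeyond]

theorem pointBeyond_vsub (c s : P) (r : ℝ) :
    pointBeyond c s r -ᵥ s = -(r • NormedSpace.normalize (c -ᵥ s)) := by
  rw [pointBeyond, AffineMap.lineMap_vsub_left, NormedSpace.normalize, dist_comm,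
    dist_eq_norm_vsub V, smul_smul, ← neg_smul, neg_div, div_eq_mul_inv]

theorem wbtw_pointBeyond (c s : P) (h₁ : 0 ≤ r₁) (h₂ : r₁ ≤ r₂) :
    Wbtw ℝ c (pointBeyond c s r₁) (pointBeyond c s r₂) := by
  have le_one : -r₁ / dist s c ≤ 1 :=
    (div_nonpos_of_nonpos_of_nonneg (neg_nonpos.2 h₁) dist_nonneg).trans zero_le_one
  have le_param : -r₂ / dist s c ≤ -r₁ / dist s c := by gcongr
  simpa only [pointBeyond, AffineMap.lineMap_apply_one] using
    (Wbtw.of_le_of_le le_param le_one).symm.map (AffineMap.lineMap s c)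

theorem dist_right_pointBeyond (hcs : c ≠ s) (hr : 0 ≤ r) : dist s (pointBeyond c s r) = r := by
  rw [dist_comm, dist_eq_norm_vsub V, pointBeyond_vsub, norm_neg,
    norm_smul, NormedSpace.norm_normalize_eq_one_iff.2 (vsub_ne_zero.2 hcs), mul_one,
    norm_of_nonneg hr]

theorem dist_left_pointBeyond (hcs : c ≠ s) (hr : 0 ≤ r) :
    dist c (pointBeyond c s r) = dist s c + r := by
  have hs : Wbtw ℝ c s (pointBeyond c s r) := by
    simpa using wbtw_pointBeyond c s le_rfl hr
  rw [← hs.dist_add_dist, dist_right_pointBeyond hcs hr, dist_comm]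

theorem angle_pointBeyond (a c s : P) (hr : 0 < r) :
    ∠ a s (pointBeyond c s r) = π - ∠ a s c := by
  rw [angle, pointBeyond_vsub, InnerProductGeometry.angle_neg_right,
    InnerProductGeometry.angle_smul_right_of_pos _ _ hr,
    InnerProductGeometry.angle_normalize_right, angle]

/-- By the angle bisector theorem, the point on the left is where the bisector at `s` meets
`ab`. -/
theorem lineMap_dist_div_vsub (b : P) (has : a ≠ s) :
    AffineMap.lineMap a b (dist s a / (dist s a + dist s b)) -ᵥ s =
      (dist s a * dist s b / (dist s a + dist s b)) •
        (NormedSpace.normalize (a -ᵥ s) + NormedSpace.normalize (b -ᵥ s)) := by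
  have smul_normalize (p : P) : p -ᵥ s = dist s p • NormedSpace.normalize (p -ᵥ s) := by
    rw [dist_comm, dist_eq_norm_vsub V, NormedSpace.norm_smul_normalize]
  have sum_pos : 0 < dist s a + dist s b :=
    add_pos_of_pos_of_nonneg (dist_pos.2 has.symm) dist_nonneg
  have one_sub : 1 - dist s a / (dist s a + dist s b) = dist s b / (dist s a + dist s b) := by
    field_simp
    ring
  calc AffineMap.lineMap a b (dist s a / (dist s a + dist s b)) -ᵥ s
      = (dist s b / (dist s a + dist s b)) • (a -ᵥ s) +
          (dist s a / (dist s a + dist s b)) • (b -ᵥ s) := by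
        rw [← one_sub, AffineMap.lineMap_apply, vadd_vsub_assoc, ← vsub_sub_vsub_cancel_right b a s]
        module
    _ = _ := by
        conv_lhs => rw [smul_normalize a, smul_normalize b]
        module

theorem lineMap_dist_div_eq_pointBeyond (hab : ∠ a s b = 2 * π / 3) (hbc : ∠ b s c = 2 * π / 3)
    (hca : ∠ c s a = 2 * π / 3) :
    AffineMap.lineMap a b (dist s a / (dist s a + dist s b)) =
      pointBeyond c s (dist s a * dist s b / (dist s a + dist s b)) := by
  have sum_eq_zero := normalize_add_normalize_add_normalize_of_angle_eq_two_pi_div_three hab hbc hca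
  have has : a ≠ s := vsub_ne_zero.1 (ne_zero_left_of_angle_eq_two_pi_div_three hab)
  apply vsub_left_cancel (p := s)
  rw [lineMap_dist_div_vsub b has, pointBeyond_vsub, eq_neg_of_add_eq_zero_left sum_eq_zero,
    smul_neg]

theorem wOppSide_pointBeyond (hab : ∠ a s b = 2 * π / 3) (hbc : ∠ b s c = 2 * π / 3)
    (hca : ∠ c s a = 2 * π / 3) :
    line[ℝ, a, b].WOppSide c (pointBeyond c s (dist s a + dist s b)) := by
  have foot_le : dist s a * dist s b / (dist s a + dist s b) ≤ dist s a + dist s b := by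
    have ha : 0 ≤ dist s a := dist_nonneg
    have hb : 0 ≤ dist s b := dist_nonneg
    exact div_le_of_le_mul₀ (by positivity) (by positivity) (by nlinarith)
  refine (wbtw_pointBeyond c s (by positivity) foot_le).wOppSide₁₃ ?_
  rw [← lineMap_dist_div_eq_pointBeyond hab hbc hca]
  exact AffineMap.lineMap_mem_affineSpan_pair _ a b

theorem dist_pointBeyond_eq_dist (hab : ∠ a s b = 2 * π / 3) (hca : ∠ c s a = 2 * π / 3) :
    dist (pointBeyond c s (dist s a + dist s b)) a = dist a b := by
  have hcs : c ≠ s := vsub_ne_zero.1 (ne_zero_left_of_angle_eq_two_pi_div_three hca)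
  have has : a ≠ s := vsub_ne_zero.1 (ne_zero_left_of_angle_eq_two_pi_div_three hab)
  have sum_pos : 0 < dist s a + dist s b :=
    add_pos_of_pos_of_nonneg (dist_pos.2 has.symm) dist_nonneg
  refine dist_eq_dist_of_angle_eq_pi_div_three hab ?_ (dist_right_pointBeyond hcs sum_pos.le)
  rw [angle_pointBeyond a c s sum_pos, angle_comm, hca]
  ring

theorem melzak_equilateral_identity_general (hasb : ∠ a s b = 2 * π / 3)
    (hbsc : ∠ b s c = 2 * π / 3) (hcsa : ∠ c s a = 2 * π / 3)
    (hda : dist d a = dist a b) (hdb : dist d b = dist a b)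
    (hside : line[ℝ, a, b].SOppSide c d) :
    dist c d = dist s a + dist s b + dist s c := by
  set e := pointBeyond c s (dist s a + dist s b) with he
  have hcs : c ≠ s := vsub_ne_zero.1 (ne_zero_left_of_angle_eq_two_pi_div_three hcsa)
  have hea : dist e a = dist a b := dist_pointBeyond_eq_dist hasb hcsa
  have heb : dist e b = dist a b := by
    rw [he, add_comm, dist_comm a b]
    exact dist_pointBeyond_eq_dist (by rwa [angle_comm]) (by rwa [angle_comm])
  have same_side : line[ℝ, a, b].WSameSide e d :=
    (wOppSide_pointBeyond hasb hbsc hcsa).symm.trans_sOppSide hside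
  have hed : e = d := eq_of_wSameSide_of_dist_eq same_side (hea.trans hda.symm) (heb.trans hdb.symm)
  rw [← hed, dist_left_pointBeyond hcs (by positivity), add_comm]

end Melzak

/-- Melzak's identity: if the edges from a Steiner junction `s` to `a`, `b`, `c` pairwise
subtend angles of `2π/3`, and `d` is the apex of the equilateral triangle erected on `ab`
on the side opposite to `c`, then `dist c d = dist s a + dist s b + dist s c`. -/
theorem melzak_equilateral_identity
    (a b c s d : EuclideanSpace ℝ (Fin 2))
    (hab : a ≠ b)
    (hs : s ∉ ({a, b, c} : Set (EuclideanSpace ℝ (Fin 2))))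
    (hasb : ∠ a s b = 2 * π / 3)
    (hbsc : ∠ b s c = 2 * π / 3)
    (hcsa : ∠ c s a = 2 * π / 3)
    (hda : dist d a = dist a b) (hdb : dist d b = dist a b)
    (hside : (affineSpan ℝ ({a, b} : Set (EuclideanSpace ℝ (Fin 2)))).SOppSide c d) :
    dist c d = dist s a + dist s b + dist s c :=
  melzak_equilateral_identity_general hasb hbsc hcsa hda hdb hside
end
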